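/- arXiv:1703.01861 — 6 statements merged into one kernel-verified Lean document; each statement's English description precedes it below -/
import Mathlib

section
/- The ideal J generated by w₁², w₂², w₁w₂ and z₂w₁ − z₁w₂ in the polynomial ring S = ℂ[z₁,z₂,w₁,w₂] is a primary ideal. -/
/-!
Let `R = ℂ[z₁,z₂]` and let `Φ : S → R[ε]`, `ε² = 0`, send `zᵢ ↦ zᵢ` and `wᵢ ↦ zᵢ ε`. Modulo `J`
every polynomial has the form `a + b w₁ + c w₂` with `a, b, c ∈ R` (`exists_normalForm`), and its
image under `Φ` is `a + (z₁ b + z₂ c) ε`. If this vanishes, then `a = 0` and, `z₁, z₂` being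
non-associated primes of `R`, `(b, c)` is a multiple of `(-z₂, z₁)`; hence the polynomial lies in
`J`. So `J = ker Φ` (`J_eq_comap`). Since `R` is a domain, the zero ideal of `R[ε]` is primary
(`isPrimary_bot_dualNumber`), and so is its preimage `J`.
-/

open MvPolynomial

/-- The coordinate `z₁` in `S = ℂ[z₁,z₂,w₁,w₂]`. -/
noncomputable def z₁ : MvPolynomial (Fin 4) ℂ := X 0
/-- The coordinate `z₂`. -/
noncomputable def z₂ : MvPolynomial (Fin 4) ℂ := X 1
/-- The coordinate `w₁`. -/
noncomputable def w₁ : MvPolynomial (Fin 4) ℂ := X 2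
/-- The coordinate `w₂`. -/
noncomputable def w₂ : MvPolynomial (Fin 4) ℂ := X 3

/-- The ideal `J = (w₁², w₂², w₁w₂, z₂w₁ − z₁w₂)` of Example 3.5. -/
noncomputable def J : Ideal (MvPolynomial (Fin 4) ℂ) :=
  Ideal.span {w₁ ^ 2, w₂ ^ 2, w₁ * w₂, z₂ * w₁ - z₁ * w₂}

/-- Over a domain `R`, every zero divisor of `R[ε]` is a multiple of `ε`, hence nilpotent. -/
theorem isPrimary_bot_dualNumber (R : Type*) [CommRing R] [IsDomain R] :
    (⊥ : Ideal (DualNumber R)).IsPrimary := by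
  rw [Ideal.isPrimary_iff]
  refine ⟨bot_ne_top, fun {x y} h => ?_⟩
  rw [Ideal.mem_bot] at h
  have h1 : x.fst * y.fst = 0 := by simpa using congrArg TrivSqZeroExt.fst h
  have h2 : x.fst * y.snd + y.fst * x.snd = 0 := by
    simpa [mul_comm] using congrArg TrivSqZeroExt.snd h
  by_cases hy : y.fst = 0
  · right
    refine ⟨2, ?_⟩
    rw [Ideal.mem_bot]
    ext <;> simp [pow_two, hy]
  · left
    have hx : x.fst = 0 := (mul_eq_zero.mp h1).resolve_right hy
    rw [hx, zero_mul, zero_add] at h2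
    rw [Ideal.mem_bot]
    ext
    · simpa using hx
    · simpa using (mul_eq_zero.mp h2).resolve_left hy

/-- The inclusion `ℂ[z₁,z₂] → S`. -/
noncomputable def incl : MvPolynomial (Fin 2) ℂ →ₐ[ℂ] MvPolynomial (Fin 4) ℂ :=
  aeval ![z₁, z₂]

/-- The homomorphism `S → ℂ[z₁,z₂][ε]` with `zᵢ ↦ zᵢ` and `wᵢ ↦ zᵢ ε`. -/
noncomputable def Phi : MvPolynomial (Fin 4) ℂ →ₐ[ℂ] DualNumber (MvPolynomial (Fin 2) ℂ) :=
  aeval ![TrivSqZeroExt.inl (X 0), TrivSqZeroExt.inl (X 1),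
    TrivSqZeroExt.inr (X 0), TrivSqZeroExt.inr (X 1)]

theorem Phi_z₁ : Phi z₁ = TrivSqZeroExt.inl (X 0) := by simp [Phi, z₁]

theorem Phi_z₂ : Phi z₂ = TrivSqZeroExt.inl (X 1) := by simp [Phi, z₂]

theorem Phi_w₁ : Phi w₁ = TrivSqZeroExt.inr (X 0) := by simp [Phi, w₁]

theorem Phi_w₂ : Phi w₂ = TrivSqZeroExt.inr (X 1) := by simp [Phi, w₂]

theorem Phi_incl (p : MvPolynomial (Fin 2) ℂ) : Phi (incl p) = TrivSqZeroExt.inl p := by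
  have h : Phi.comp incl = TrivSqZeroExt.inlAlgHom ℂ _ _ := by
    ext i : 1
    fin_cases i <;> simp [incl, Phi_z₁, Phi_z₂]
  exact DFunLike.congr_fun h p

theorem w₁_sq_mem : w₁ ^ 2 ∈ J := Ideal.subset_span (by simp)

theorem w₂_sq_mem : w₂ ^ 2 ∈ J := Ideal.subset_span (by simp)

theorem w₁_mul_w₂_mem : w₁ * w₂ ∈ J := Ideal.subset_span (by simp)

theorem koszul_mem : z₂ * w₁ - z₁ * w₂ ∈ J := Ideal.subset_span (by simp)

/-- Modulo `J`, every polynomial is a `ℂ[z₁,z₂]`-combination of `1`, `w₁`, `w₂`. -/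
theorem exists_normalForm (f : MvPolynomial (Fin 4) ℂ) :
    ∃ a b c, f - (incl a + incl b * w₁ + incl c * w₂) ∈ J := by
  induction f using MvPolynomial.induction_on with
  | C r => exact ⟨C r, 0, 0, by simp [incl, algebraMap_eq]⟩
  | add p q hp hq =>
    obtain ⟨a, b, c, h⟩ := hp
    obtain ⟨a', b', c', h'⟩ := hq
    refine ⟨a + a', b + b', c + c', ?_⟩
    convert J.add_mem h h' using 1
    simp only [map_add]
    ring
  | mul_X p i hp =>
    obtain ⟨a, b, c, h⟩ := hp
    have hi : i = 0 ∨ i = 1 ∨ i = 2 ∨ i = 3 := by fin_cases i <;> simp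
    rcases hi with rfl | rfl | rfl | rfl
    · refine ⟨a * X 0, b * X 0, c * X 0, ?_⟩
      convert J.mul_mem_right z₁ h using 1
      have : incl (X 0) = z₁ := by simp [incl]
      simp only [map_mul, this]
      change p * z₁ - _ = _
      ring
    · refine ⟨a * X 1, b * X 1, c * X 1, ?_⟩
      convert J.mul_mem_right z₂ h using 1
      have : incl (X 1) = z₂ := by simp [incl]
      simp only [map_mul, this]
      change p * z₂ - _ = _
      ring
    · refine ⟨0, a, 0, ?_⟩
      convert J.add_mem (J.mul_mem_right w₁ h) (J.add_mem (J.mul_mem_left (incl b) w₁_sq_mem)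
        (J.mul_mem_left (incl c) w₁_mul_w₂_mem)) using 1
      simp only [map_zero]
      change p * w₁ - _ = _
      ring
    · refine ⟨0, 0, a, ?_⟩
      convert J.add_mem (J.mul_mem_right w₂ h) (J.add_mem (J.mul_mem_left (incl b) w₁_mul_w₂_mem)
        (J.mul_mem_left (incl c) w₂_sq_mem)) using 1
      simp only [map_zero]
      change p * w₂ - _ = _
      ring

theorem J_le_comap : J ≤ Ideal.comap Phi ⊥ := by
  refine Ideal.span_le.mpr ?_
  rintro f (rfl | rfl | rfl | rfl) <;>
    simp only [SetLike.mem_coe, Ideal.mem_comap, Ideal.mem_bot, map_mul, map_sub, map_pow,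
      Phi_z₁, Phi_z₂, Phi_w₁, Phi_w₂] <;>
    ext <;> simp [pow_two, mul_comm]

/-- The syzygies of `(z₁, z₂)` in `ℂ[z₁,z₂]` are generated by `(-z₂, z₁)`. -/
theorem syzygy {b c : MvPolynomial (Fin 2) ℂ} (h : b * X 0 + c * X 1 = 0) :
    ∃ g, b = -(g * X 1) ∧ c = g * X 0 := by
  have hdvd : (X 0 : MvPolynomial (Fin 2) ℂ) ∣ c * X 1 := ⟨-b, by linear_combination h⟩
  have hX : ¬ (X 0 : MvPolynomial (Fin 2) ℂ) ∣ X 1 := by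
    rw [X_dvd_X]
    simp
  obtain ⟨g, rfl⟩ := ((X_prime (R := ℂ) (i := (0 : Fin 2))).dvd_or_dvd hdvd).resolve_right hX
  refine ⟨g, ?_, mul_comm _ _⟩
  refine mul_right_cancel₀ (X_ne_zero (R := ℂ) (0 : Fin 2)) ?_
  linear_combination h

theorem J_eq_comap : J = Ideal.comap Phi ⊥ := by
  refine le_antisymm J_le_comap fun f hf => ?_
  obtain ⟨a, b, c, h⟩ := exists_normalForm f
  have h0 : Phi (incl a + incl b * w₁ + incl c * w₂) = 0 := by
    have h1 : Phi (f - (incl a + incl b * w₁ + incl c * w₂)) = 0 := J_le_comap h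
    have h2 : Phi f = 0 := hf
    rwa [map_sub, h2, zero_sub, neg_eq_zero] at h1
  simp only [map_add, map_mul, Phi_incl, Phi_w₁, Phi_w₂] at h0
  have ha : a = 0 := by simpa using congrArg TrivSqZeroExt.fst h0
  have hbc : b * X 0 + c * X 1 = 0 := by
    simpa [mul_comm] using congrArg TrivSqZeroExt.snd h0
  obtain ⟨g, rfl, rfl⟩ := syzygy hbc
  subst ha
  convert J.sub_mem h (J.mul_mem_left (incl g) koszul_mem) using 1
  have e0 : incl (X 0) = z₁ := by simp [incl]
  have e1 : incl (X 1) = z₂ := by simp [incl]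
  simp only [map_neg, map_mul, map_zero, e0, e1]
  ring

/-- The ideal `J` is primary. -/
theorem J_isPrimary : J.IsPrimary := by
  rw [J_eq_comap]
  exact (isPrimary_bot_dualNumber _).comap Phi.toRingHom
end

section
/- Let S = ℂ[z₁,z₂,w₁,w₂] and let J ⊆ S be the ideal generated by w₁², w₂², w₁w₂ and z₂w₁ − z₁w₂. Define S-linear maps f₃ : S → S⁴, f₂ : S⁴ → S⁴, f₁ : S⁴ → S by the matrices f₃ = (w₂, −w₁, z₂, −z₁)ᵗ, f₂ = [[z₂, 0, −w₂, 0], [−z₁, z₂, w₁, −w₂], [0, −z₁, 0, w₁], [−w₁, −w₂, 0, 0]], and f₁ = [w₁², w₁w₂, w₂², z₂w₁ − z₁w₂]. Then 0 → S →^{f₃} S⁴ →^{f₂} S⁴ →^{f₁} S is an exact complex with image of f₁ equal to J; that is, f₁∘f₂ = 0, f₂∘f₃ = 0, f₃ is injective, ker f₂ = im f₃, ker f₁ = im f₂, and im f₁ = J, so the complex is a free resolution of S/J. -/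
/-!
Exactness is checked by hand, using only divisibility by the variables.

Exactness of `f₃`, `f₂`: if `f₂ a = 0` then `z₂ a₀ = w₂ a₂`, so `a₀ = w₂ s` because `w₂` is a
prime not dividing `z₂`; cancelling variables in the remaining rows gives `a = f₃ s`.

Exactness of `f₂`, `f₁`: if `f₁ a = 0`, reducing modulo `w₁` and cancelling `w₂` gives
`z₁ a₃ ∈ (w₁, w₂)`, hence `a₃ = -(w₁ p + w₂ q)` (`mem_of_z₁_mul`). Subtracting `f₂ (p, q, 0, 0)`
leaves a relation `b₀ w₁² + b₁ w₁ w₂ + b₂ w₂² = 0`, and such relations are generated by the last two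
columns of `f₂`, whose fourth entries vanish (`relation_sq`).
-/

open MvPolynomial

/-- The map `f₃ : S → S⁴` given by the column matrix `(w₂, −w₁, z₂, −z₁)ᵗ`. -/
noncomputable def f₃ : MvPolynomial (Fin 4) ℂ →ₗ[MvPolynomial (Fin 4) ℂ]
    (Fin 4 → MvPolynomial (Fin 4) ℂ) :=
  LinearMap.pi fun i =>
    LinearMap.toSpanSingleton (MvPolynomial (Fin 4) ℂ) (MvPolynomial (Fin 4) ℂ)
      (![w₂, -w₁, z₂, -z₁] i)

/-- The map `f₂ : S⁴ → S⁴` given by the matrix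
`[[z₂, 0, −w₂, 0], [−z₁, z₂, w₁, −w₂], [0, −z₁, 0, w₁], [−w₁, −w₂, 0, 0]]`. -/
noncomputable def f₂ : (Fin 4 → MvPolynomial (Fin 4) ℂ) →ₗ[MvPolynomial (Fin 4) ℂ]
    (Fin 4 → MvPolynomial (Fin 4) ℂ) :=
  Matrix.mulVecLin
    !![z₂, 0, -w₂, 0; -z₁, z₂, w₁, -w₂; 0, -z₁, 0, w₁; -w₁, -w₂, 0, 0]

/-- The map `f₁ : S⁴ → S` given by the row matrix `[w₁², w₁w₂, w₂², z₂w₁ − z₁w₂]`. -/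
noncomputable def f₁ : (Fin 4 → MvPolynomial (Fin 4) ℂ) →ₗ[MvPolynomial (Fin 4) ℂ]
    MvPolynomial (Fin 4) ℂ :=
  ∑ i : Fin 4, ![w₁ ^ 2, w₁ * w₂, w₂ ^ 2, z₂ * w₁ - z₁ * w₂] i • LinearMap.proj i

/-- A variable that divides a product with a different variable divides the other factor. -/
lemma X_dvd_of_X_mul {i j : Fin 4} (hij : i ≠ j) {p q : MvPolynomial (Fin 4) ℂ}
    (h : X j * p = X i * q) : ∃ s, p = X i * s := by
  have hd : (X i : MvPolynomial (Fin 4) ℂ) ∣ X j * p := ⟨q, h⟩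
  rcases (X_prime (R := ℂ)).dvd_or_dvd hd with hd | hd
  · exact absurd (X_dvd_X.1 hd) (by simpa using hij)
  · exact hd

lemma w₁_ne : w₁ ≠ 0 := X_ne_zero _

lemma w₂_ne : w₂ ≠ 0 := X_ne_zero _

/-- `z₁` is a nonzerodivisor modulo the ideal `(w₁, w₂)`. -/
lemma mem_of_z₁_mul {a b c : MvPolynomial (Fin 4) ℂ} (h : z₁ * a = w₁ * b + w₂ * c) :
    ∃ p q, a = w₁ * p + w₂ * q := by
  have key : a ∈ Ideal.span ((X : Fin 4 → MvPolynomial (Fin 4) ℂ) '' {2, 3}) := by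
    have hm : a * X 0 ∈ Ideal.span ((X : Fin 4 → MvPolynomial (Fin 4) ℂ) '' {2, 3}) := by
      rw [Set.image_pair, Ideal.mem_span_pair]
      refine ⟨b, c, ?_⟩
      unfold z₁ w₁ w₂ at h
      linear_combination -h
    rw [mem_ideal_span_X_image] at hm ⊢
    intro m hma
    -- the exponents of `w₁`, `w₂` in a monomial are unchanged by multiplication by `z₁`
    obtain ⟨i, hi, hne⟩ := hm (m + Finsupp.single 0 1) (by
      rw [mem_support_iff, coeff_mul_X]
      exact mem_support_iff.1 hma)
    refine ⟨i, hi, ?_⟩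
    rcases hi with rfl | rfl <;> simpa using hne
  rw [Set.image_pair, Ideal.mem_span_pair] at key
  obtain ⟨p, q, hpq⟩ := key
  exact ⟨p, q, by unfold w₁ w₂; rw [← hpq]; ring⟩

/-- The syzygies of `w₁², w₁w₂, w₂²` are generated by `(-w₂, w₁, 0)` and `(0, -w₂, w₁)`. -/
lemma relation_sq {b₀ b₁ b₂ : MvPolynomial (Fin 4) ℂ}
    (h : w₁ ^ 2 * b₀ + w₁ * w₂ * b₁ + w₂ ^ 2 * b₂ = 0) :
    ∃ u v, b₀ = -(w₂ * u) ∧ b₁ = w₁ * u - w₂ * v ∧ b₂ = w₁ * v := by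
  obtain ⟨t, ht⟩ := X_dvd_of_X_mul (i := 2) (j := 3) (by decide)
    (p := w₂ * b₂) (q := -(w₁ * b₀ + w₂ * b₁)) (by
      change w₂ * _ = w₁ * _
      linear_combination h)
  obtain ⟨v, hv⟩ := X_dvd_of_X_mul (i := 2) (j := 3) (by decide) ht
  change b₂ = w₁ * v at hv
  subst hv
  have h' : w₁ * b₀ + w₂ * b₁ + w₂ ^ 2 * v = 0 :=
    mul_left_cancel₀ w₁_ne (by linear_combination h)
  obtain ⟨u, hu⟩ := X_dvd_of_X_mul (i := 3) (j := 2) (by decide)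
    (p := b₀) (q := -(b₁ + w₂ * v)) (by
      change w₁ * _ = w₂ * _
      linear_combination h')
  change b₀ = w₂ * u at hu
  subst hu
  exact ⟨-u, v, by ring, mul_left_cancel₀ w₂_ne (by linear_combination h'), rfl⟩

lemma f₁_apply (a : Fin 4 → MvPolynomial (Fin 4) ℂ) :
    f₁ a = w₁ ^ 2 * a 0 + w₁ * w₂ * a 1 + w₂ ^ 2 * a 2 + (z₂ * w₁ - z₁ * w₂) * a 3 := by
  simp [f₁, Fin.sum_univ_four]

lemma f₂_apply (a : Fin 4 → MvPolynomial (Fin 4) ℂ) :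
    f₂ a = ![z₂ * a 0 - w₂ * a 2, -z₁ * a 0 + z₂ * a 1 + w₁ * a 2 - w₂ * a 3,
      -z₁ * a 1 + w₁ * a 3, -w₁ * a 0 - w₂ * a 1] := by
  funext i
  fin_cases i <;> simp [f₂, Matrix.mulVec, dotProduct, Fin.sum_univ_four] <;> ring

lemma f₃_apply (s : MvPolynomial (Fin 4) ℂ) :
    f₃ s = ![s * w₂, -(s * w₁), s * z₂, -(s * z₁)] := by
  funext i
  fin_cases i <;> simp [f₃]

lemma f₁_f₂ (a : Fin 4 → MvPolynomial (Fin 4) ℂ) : f₁ (f₂ a) = 0 := by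
  rw [f₁_apply, f₂_apply]
  simp
  ring

lemma f₂_f₃ (s : MvPolynomial (Fin 4) ℂ) : f₂ (f₃ s) = 0 := by
  rw [f₂_apply, f₃_apply]
  funext i
  fin_cases i <;> simp <;> ring

lemma exact_f₂ {a : Fin 4 → MvPolynomial (Fin 4) ℂ} (h : f₂ a = 0) : ∃ s, f₃ s = a := by
  rw [f₂_apply] at h
  have h0 := congrFun h 0
  have h2 := congrFun h 2
  have h3 := congrFun h 3
  simp at h0 h2 h3
  obtain ⟨s, hs⟩ := X_dvd_of_X_mul (i := 3) (j := 1) (by decide) (p := a 0) (q := a 2) (by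
    change z₂ * _ = w₂ * _
    linear_combination h0)
  change a 0 = w₂ * s at hs
  have e2 : a 2 = z₂ * s := mul_left_cancel₀ w₂_ne (by linear_combination z₂ * hs - h0)
  have e1 : a 1 = -(w₁ * s) := mul_left_cancel₀ w₂_ne (by linear_combination -h3 - w₁ * hs)
  have e3 : a 3 = -(z₁ * s) := mul_left_cancel₀ w₁_ne (by linear_combination h2 + z₁ * e1)
  refine ⟨s, ?_⟩
  rw [f₃_apply]
  funext i
  fin_cases i <;> simp [hs, e1, e2, e3] <;> ring

lemma exact_f₁ {a : Fin 4 → MvPolynomial (Fin 4) ℂ} (h : f₁ a = 0) : ∃ b, f₂ b = a := by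
  rw [f₁_apply] at h
  obtain ⟨t, ht⟩ := X_dvd_of_X_mul (i := 2) (j := 3) (by decide)
    (p := w₂ * a 2 - z₁ * a 3) (q := -(w₁ * a 0 + w₂ * a 1 + z₂ * a 3)) (by
      change w₂ * _ = w₁ * _
      linear_combination h)
  change _ = w₁ * t at ht
  obtain ⟨p, q, hpq⟩ := mem_of_z₁_mul (a := a 3) (b := -t) (c := a 2) (by
    linear_combination -ht)
  -- subtract `f₂ (-p, -q, 0, 0)`, whose last entry is `a 3`
  obtain ⟨u, v, h0, h1, h2⟩ := relation_sq (b₀ := a 0 + z₂ * p)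
    (b₁ := a 1 - z₁ * p + z₂ * q) (b₂ := a 2 - z₁ * q) (by
      linear_combination h - (z₂ * w₁ - z₁ * w₂) * hpq)
  refine ⟨![-p, -q, u, v], ?_⟩
  rw [f₂_apply]
  funext i
  fin_cases i <;> simp
  · linear_combination -h0
  · linear_combination -h1
  · linear_combination -h2
  · linear_combination -hpq

lemma range_f₁ : LinearMap.range f₁ = J := by
  apply le_antisymm
  · rintro _ ⟨a, rfl⟩
    rw [f₁_apply]
    have hJ : ∀ g ∈ ({w₁ ^ 2, w₂ ^ 2, w₁ * w₂, z₂ * w₁ - z₁ * w₂} :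
        Set (MvPolynomial (Fin 4) ℂ)), ∀ c, g * c ∈ J :=
      fun g hg c => J.mul_mem_right c (Ideal.subset_span hg)
    exact J.add_mem (J.add_mem (J.add_mem (hJ _ (by simp) _) (hJ _ (by simp) _))
      (hJ _ (by simp) _)) (hJ _ (by simp) _)
  · refine Submodule.span_le.2 ?_
    rintro g (rfl | rfl | rfl | rfl)
    · exact ⟨![1, 0, 0, 0], by simp [f₁_apply]⟩
    · exact ⟨![0, 0, 1, 0], by simp [f₁_apply]⟩
    · exact ⟨![0, 1, 0, 0], by simp [f₁_apply]⟩
    · exact ⟨![0, 0, 0, 1], by simp [f₁_apply]⟩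

/-- `0 → S →f₃ S⁴ →f₂ S⁴ →f₁ S` is an exact complex with image of `f₁` equal to `J`;
i.e. it is a free resolution of `S/J`. -/
theorem stmt7 :
    f₁.comp f₂ = 0 ∧ f₂.comp f₃ = 0 ∧ Function.Injective f₃ ∧
    LinearMap.ker f₂ = LinearMap.range f₃ ∧
    LinearMap.ker f₁ = LinearMap.range f₂ ∧
    LinearMap.range f₁ = J := by
  refine ⟨LinearMap.ext f₁_f₂, LinearMap.ext f₂_f₃, ?_, ?_, ?_, range_f₁⟩
  · intro s t h
    have h0 := congrFun h 0
    simp only [f₃_apply, Matrix.cons_val_zero] at h0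
    exact mul_right_cancel₀ w₂_ne h0
  · apply le_antisymm
    · exact fun a ha => exact_f₂ ha
    · rintro _ ⟨s, rfl⟩
      exact f₂_f₃ s
  · apply le_antisymm
    · exact fun a ha => exact_f₁ ha
    · rintro _ ⟨b, rfl⟩
      exact f₁_f₂ b
end

section
/- Let q ≥ 2 and β be integers with 0 ≤ β ≤ q − 2. Then the function ℂ \ {0} → ℝ given by w ↦ |w|^{2q} ∫₀¹ s^β (s + |w|²)^{−q} ds extends to a C^∞ function on all of ℂ (with value 0 at w = 0). -/
/-!
Write `t = |w|²` and `q = n + k + 2` with `n = β`. The substitution `v = s / (s + t)` turns the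
integral into an incomplete beta integral:
`∫₀¹ s^n (s + t)^{-q} ds = t^{-(k+1)} P(1 / (1 + t))`, where `P x = ∫₀ˣ v^n (1 - v)^k dv`.
Since `k ≥ 0`, `P` is smooth on `ℝ` (it is a polynomial), so
`t^q ∫₀¹ s^n (s + t)^{-q} ds = t^{n+1} P(1 / (1 + t))` is a smooth function of `t > -1`,
and `|w|²` is a smooth function of `w`.
-/

open MeasureTheory

/-- The incomplete beta integral `∫₀ˣ v^n (1 - v)^k dv`. -/
noncomputable def incBeta (n k : ℕ) (x : ℝ) : ℝ := ∫ v in (0:ℝ)..x, v ^ n * (1 - v) ^ k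

theorem hasDerivAt_incBeta (n k : ℕ) (x : ℝ) :
    HasDerivAt (incBeta n k) (x ^ n * (1 - x) ^ k) x := by
  have hc : Continuous fun v : ℝ => v ^ n * (1 - v) ^ k := by fun_prop
  exact (hc.integral_hasStrictDerivAt 0 x).hasDerivAt

theorem contDiff_incBeta (n k : ℕ) : ContDiff ℝ (⊤ : ℕ∞) (incBeta n k) := by
  rw [contDiff_infty_iff_deriv]
  refine ⟨fun x => (hasDerivAt_incBeta n k x).differentiableAt, ?_⟩
  have h : deriv (incBeta n k) = fun x => x ^ n * (1 - x) ^ k :=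
    funext fun x => (hasDerivAt_incBeta n k x).deriv
  rw [h]
  fun_prop

/-- The change of variables `v = s / (s + t)`, carried out by exhibiting the primitive
`s ↦ t^{-(k+1)} incBeta n k (s / (s + t))` of the integrand. -/
theorem integral_eq_incBeta (n k : ℕ) {t : ℝ} (ht : 0 < t) :
    ∫ s in (0:ℝ)..1, s ^ n * ((s + t) ^ (n + k + 2))⁻¹
      = (t ^ (k + 1))⁻¹ * incBeta n k (1 / (1 + t)) := by
  have hpos : ∀ s ∈ Set.uIcc (0:ℝ) 1, 0 < s + t := by
    intro s hs
    rw [Set.uIcc_of_le zero_le_one] at hs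
    linarith [hs.1]
  have hder : ∀ s ∈ Set.uIcc (0:ℝ) 1,
      HasDerivAt (fun s => (t ^ (k + 1))⁻¹ * incBeta n k (s / (s + t)))
        (s ^ n * ((s + t) ^ (n + k + 2))⁻¹) s := by
    intro s hs
    have hne : s + t ≠ 0 := (hpos s hs).ne'
    have h1 : HasDerivAt (fun s : ℝ => s / (s + t)) ((1 * (s + t) - s * 1) / (s + t) ^ 2) s :=
      (hasDerivAt_id s).div ((hasDerivAt_id s).add_const t) hne
    have h2 := ((hasDerivAt_incBeta n k (s / (s + t))).comp s h1).const_mul (t ^ (k + 1))⁻¹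
    refine h2.congr_deriv ?_
    have h3 : 1 - s / (s + t) = t / (s + t) := by field_simp; ring
    rw [h3, div_pow, div_pow]
    have htne := ht.ne'
    field_simp
    ring
  have hint : IntervalIntegrable (fun s : ℝ => s ^ n * ((s + t) ^ (n + k + 2))⁻¹) volume 0 1 := by
    apply ContinuousOn.intervalIntegrable
    refine ContinuousOn.mul (by fun_prop) (ContinuousOn.inv₀ (by fun_prop) ?_)
    intro s hs
    exact pow_ne_zero _ (hpos s hs).ne'
  rw [intervalIntegral.integral_eq_sub_of_hasDerivAt hder hint]
  simp [incBeta]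

/-- For integers `q ≥ 2` and `0 ≤ β ≤ q − 2`, the function
`w ↦ |w|^{2q} ∫₀¹ s^β (s + |w|²)^{−q} ds` on `ℂ \ {0}` extends to a `C^∞` function on `ℂ`,
with value `0` at `w = 0`. -/
theorem stmt10 (q β : ℤ) (hq : 2 ≤ q) (hβ0 : 0 ≤ β) (hβ : β ≤ q - 2) :
    ∃ g : ℂ → ℝ, ContDiff ℝ (⊤ : ℕ∞) g ∧ g 0 = 0 ∧
      ∀ w : ℂ, w ≠ 0 →
        g w = ‖w‖ ^ (2 * q) * ∫ s in (0:ℝ)..1, s ^ β * (s + ‖w‖ ^ 2) ^ (-q) := by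
  obtain ⟨n, rfl⟩ := Int.eq_ofNat_of_zero_le hβ0
  obtain ⟨k, hk⟩ := Int.eq_ofNat_of_zero_le (sub_nonneg.2 hβ)
  obtain rfl : q = ((n + k + 2 : ℕ) : ℤ) := by push_cast; lia
  have hsq : ContDiff ℝ (⊤ : ℕ∞) fun w : ℂ => ‖w‖ ^ 2 := contDiff_norm_sq ℝ
  refine ⟨fun w => (‖w‖ ^ 2) ^ (n + 1) * incBeta n k (1 / (1 + ‖w‖ ^ 2)), ?_, by simp, ?_⟩
  · refine (hsq.pow _).mul ((contDiff_incBeta n k).comp ?_)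
    exact contDiff_const.div (contDiff_const.add hsq) fun w => by positivity
  · intro w hw
    have ht : 0 < ‖w‖ ^ 2 := by positivity
    have hexp : ‖w‖ ^ (2 * ((n + k + 2 : ℕ) : ℤ)) = (‖w‖ ^ 2) ^ (n + k + 2) := by
      rw [zpow_mul, zpow_natCast]
      norm_cast
    simp only [zpow_neg, zpow_natCast]
    rw [hexp, integral_eq_incBeta n k ht]
    rw [show n + k + 2 = (n + 1) + (k + 1) by ring, pow_add _ (n + 1) (k + 1), mul_assoc _ ((‖w‖ ^ 2) ^ (k + 1)),
      mul_inv_cancel_left₀ (pow_ne_zero _ ht.ne')]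
end

section
/- Let q ≥ 1 and β be integers with β ≥ q − 1. Then there exist a C^∞ function G : ℂ → ℝ and a nonzero constant c (explicitly c = (−1)^{β−q}·C(β, q−1), where C(β,q−1) is the binomial coefficient) such that for all w ∈ ℂ \ {0}, |w|^{2q} ∫₀¹ s^β (s + |w|²)^{−q} ds = G(w) + c·|w|^{2(β+1)}·log(|w|²). -/
/-!
With `t = |w|²`, expanding `s ^ β = ((s + t) - t) ^ β` by the binomial theorem turns the integral
into a combination of the integrals `∫₀¹ (s + t) ^ n ds` for integers `n = k - q`, `0 ≤ k ≤ β`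
(`integral_eq_sum`). For `n ≠ -1` such an integral equals
`((1 + t) ^ (n + 1) - t ^ (n + 1)) / (n + 1)`; the negative powers of `t` are absorbed by the
factors `t ^ q` and `t ^ (β - k)`, leaving a function of `t` that is smooth for `t > -1`. Only
`n = -1`, that is `k = q - 1`, produces a logarithm, namely `log (1 + t) - log t`, and the term
`-log t` comes with the coefficient `C(β, q - 1) (-1) ^ (β - q + 1) t ^ (β + 1)`.
-/

open MeasureTheory

/-- The contribution of the `k`-th binomial term to the smooth part, as a function of `t = |w|²`
and up to the factor `C(β, k) (-1) ^ (β - k)`. -/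
noncomputable def smoothTerm (q β k : ℕ) (t : ℝ) : ℝ :=
  if k + 1 = q then t ^ (β + 1) * Real.log (1 + t)
  else (t ^ (q + (β - k)) * (1 + t) ^ ((k : ℤ) - q + 1) - t ^ (β + 1)) / ((k : ℝ) - q + 1)

lemma contDiffAt_smoothTerm (q β k : ℕ) {t : ℝ} (ht : 0 ≤ t) :
    ContDiffAt ℝ (⊤ : ℕ∞) (smoothTerm q β k) t := by
  have h1 : (1 + t) ≠ 0 := by positivity
  have hadd : ContDiffAt ℝ (⊤ : ℕ∞) (fun t : ℝ => 1 + t) t := by fun_prop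
  unfold smoothTerm
  split_ifs
  · exact (contDiffAt_id.pow _).mul (hadd.log h1)
  · refine ContDiffAt.div_const (((contDiffAt_id.pow _).mul ?_).sub (contDiffAt_id.pow _)) _
    rcases Int.eq_nat_or_neg ((k : ℤ) - q + 1) with ⟨n, hn | hn⟩
    · simp only [hn, zpow_natCast]
      exact hadd.pow n
    · simp only [hn, zpow_neg, zpow_natCast]
      exact (hadd.pow n).inv (pow_ne_zero _ h1)

lemma zero_notMem_uIcc {t : ℝ} (ht : 0 < t) : (0 : ℝ) ∉ Set.uIcc (0 + t) (1 + t) := by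
  rw [Set.uIcc_of_le (by linarith)]
  rintro ⟨h, -⟩
  linarith

lemma intervalIntegrable_add_zpow {t : ℝ} (ht : 0 < t) (n : ℤ) :
    IntervalIntegrable (fun s : ℝ => (s + t) ^ n) volume 0 1 := by
  apply ContinuousOn.intervalIntegrable
  intro s hs
  rw [Set.uIcc_of_le zero_le_one] at hs
  have : s + t ≠ 0 := by linarith [hs.1]
  exact ((continuousAt_id.add continuousAt_const).zpow₀ n (Or.inl this)).continuousWithinAt

lemma integral_eq_sum (q β : ℕ) {t : ℝ} (ht : 0 < t) :
    ∫ s in (0:ℝ)..1, s ^ (β : ℤ) * (s + t) ^ (-(q : ℤ)) =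
      ∑ k ∈ Finset.range (β + 1), (β.choose k : ℝ) * (-t) ^ (β - k) *
        ∫ s in (0:ℝ)..1, (s + t) ^ ((k : ℤ) - q) := by
  simp_rw [← intervalIntegral.integral_const_mul]
  rw [← intervalIntegral.integral_finsetSum
    fun k _ => (intervalIntegrable_add_zpow ht _).const_mul _]
  refine intervalIntegral.integral_congr fun s hs => ?_
  rw [Set.uIcc_of_le zero_le_one] at hs
  have hs0 : s + t ≠ 0 := by linarith [hs.1]
  have hb : s ^ β = ∑ k ∈ Finset.range (β + 1), (s + t) ^ k * (-t) ^ (β - k) * β.choose k := by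
    rw [← add_pow]
    ring
  simp only [zpow_natCast]
  rw [hb, Finset.sum_mul]
  refine Finset.sum_congr rfl fun k _ => ?_
  rw [sub_eq_add_neg, zpow_add₀ hs0, zpow_natCast]
  ring

/-- The `k`-th binomial term: it is `smoothTerm`, except that `k + 1 = q` also yields `log t`. -/
lemma term_eq (q β k : ℕ) (hk : k ≤ β) {t : ℝ} (ht : 0 < t) :
    t ^ q * ((-t) ^ (β - k) * ∫ s in (0:ℝ)..1, (s + t) ^ ((k : ℤ) - q)) =
      (-1) ^ (β - k) *
        (smoothTerm q β k t - if k + 1 = q then t ^ (β + 1) * Real.log t else 0) := by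
  rw [intervalIntegral.integral_comp_add_right (fun x : ℝ => x ^ ((k : ℤ) - q)), neg_pow t]
  unfold smoothTerm
  split_ifs with h
  · have hn : (k : ℤ) - q = -1 := by omega
    have hp : t ^ (β + 1) = t ^ q * t ^ (β - k) := by
      rw [← pow_add]
      congr 1
      omega
    simp only [hn, zpow_neg_one]
    rw [integral_inv (zero_notMem_uIcc ht), zero_add, Real.log_div (by positivity) ht.ne', hp]
    ring
  · have hn : (k : ℤ) - q ≠ -1 := by omega
    have hp : t ^ (β + 1) = t ^ q * t ^ (β - k) * t ^ ((k : ℤ) - q + 1) := by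
      rw [← zpow_natCast, ← zpow_natCast, ← zpow_natCast, ← zpow_add₀ ht.ne', ← zpow_add₀ ht.ne']
      congr 1
      push_cast [hk]
      ring
    rw [integral_zpow (Or.inr ⟨hn, zero_notMem_uIcc ht⟩), zero_add, hp, pow_add]
    push_cast
    ring

/-- For integers `q ≥ 1` and `β ≥ q − 1`, there are a `C^∞` function `G : ℂ → ℝ` and a nonzero
constant `c = (−1)^{β−q}·C(β, q−1)` such that for all `w ≠ 0`,
`|w|^{2q} ∫₀¹ s^β (s + |w|²)^{−q} ds = G(w) + c·|w|^{2(β+1)}·log(|w|²)`. -/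
theorem stmt11 (q β : ℕ) (hq : 1 ≤ q) (hβ : q - 1 ≤ β) :
    ∃ (G : ℂ → ℝ) (c : ℝ), ContDiff ℝ (⊤ : ℕ∞) G ∧ c ≠ 0 ∧
      c = (-1 : ℝ) ^ ((β : ℤ) - (q : ℤ)) * (β.choose (q - 1) : ℝ) ∧
      ∀ w : ℂ, w ≠ 0 →
        ‖w‖ ^ (2 * q) * (∫ s in (0:ℝ)..1, s ^ (β : ℤ) * (s + ‖w‖ ^ 2) ^ (-(q : ℤ))) =
          G w + c * ‖w‖ ^ (2 * (β + 1)) * Real.log (‖w‖ ^ 2) := by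
  refine ⟨fun w => ∑ k ∈ Finset.range (β + 1),
      (β.choose k : ℝ) * (-1) ^ (β - k) * smoothTerm q β k (‖w‖ ^ 2), _, ?_, ?_, rfl, ?_⟩
  · refine ContDiff.sum fun k _ => contDiff_const.mul ?_
    refine contDiff_iff_contDiffAt.2 fun w => ?_
    exact (contDiffAt_smoothTerm q β k (by positivity)).comp w (contDiff_norm_sq ℝ).contDiffAt
  · exact mul_ne_zero (zpow_ne_zero _ (by norm_num)) (by exact_mod_cast (Nat.choose_pos hβ).ne')
  · intro w hw
    have ht : 0 < ‖w‖ ^ 2 := by positivity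
    beta_reduce
    rw [pow_mul, pow_mul]
    generalize ‖w‖ ^ 2 = t at ht
    have hsign : (-1 : ℝ) ^ ((β : ℤ) - (q : ℤ)) = -(-1) ^ (β - (q - 1)) := by
      have : (β : ℤ) - q = ((β - (q - 1) : ℕ) : ℤ) - 1 := by omega
      rw [this, zpow_sub_one₀ (by norm_num), zpow_natCast]
      norm_num
    have hlog : ∑ k ∈ Finset.range (β + 1), (β.choose k : ℝ) * (-1) ^ (β - k) *
        (if k + 1 = q then t ^ (β + 1) * Real.log t else 0) =
        (β.choose (q - 1) : ℝ) * (-1) ^ (β - (q - 1)) * (t ^ (β + 1) * Real.log t) := by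
      rw [Finset.sum_eq_single_of_mem (q - 1) (Finset.mem_range.2 (by omega))
        fun k _ hk => by rw [if_neg (by omega), mul_zero], if_pos (by omega)]
    calc _ = ∑ k ∈ Finset.range (β + 1), ((β.choose k : ℝ) * (-1) ^ (β - k) * smoothTerm q β k t -
          (β.choose k : ℝ) * (-1) ^ (β - k) *
            (if k + 1 = q then t ^ (β + 1) * Real.log t else 0)) := by
          rw [integral_eq_sum q β ht, Finset.mul_sum]
          refine Finset.sum_congr rfl fun k hk => ?_
          have := term_eq q β k (Nat.lt_succ_iff.1 (Finset.mem_range.1 hk)) ht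
          linear_combination (β.choose k : ℝ) * this
      _ = _ := by
          rw [Finset.sum_sub_distrib, hlog, hsign]
          ring
end

section
/- For every integer m ≥ 0, the function f : ℂ → ℂ defined by f(w) = w^m·|w|²·log(|w|²) for w ≠ 0 and f(0) = 0 is of class C^m on ℂ (regarded as a function on ℝ²), but f is not of class C^∞. -/
/-!
**Regularity.** Write `L(w) = log |w|²`. The functions `G a b c = w^a · w̄^b · L^c` with `a, b ∈ ℤ`,
`c ∈ ℕ` are closed under differentiation away from the origin up to linear combinations, because
`dL = dw / w + dw̄ / w̄`, and each differentiation lowers the degree `a + b` by one. As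
`|G a b c| = |w|^(a+b) |L|^c`, such a function is `o(1)` at the origin if its degree is at least `1`
and `o(|w|)` if its degree is at least `2`. Hence (`contDiff_G`), by induction on `n`, `G a b c` is
`C^n` as soon as `a + b ≥ n + 1`; in the inductive step the formula for the derivative persists
at the origin, where both sides vanish. The function `f m` is `G (m + 1) 1 1`, of degree `m + 2`.

**Non-smoothness.** On the positive real axis `f m` is `2 x^(m+2) log x`. Differentiating `n` times
a smooth function equal to `x^n (α log x + β)` for `x > 0` leaves `α' log x + β'` with
`α' = n! α`, which is unbounded near `0` when `α ≠ 0` (`not_contDiff_pow_mul_log`).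
-/

/-- The function `f(w) = w^m·|w|²·log(|w|²)` (with `f(0) = 0`). -/
noncomputable def f (m : ℕ) : ℂ → ℂ := fun w =>
  if w = 0 then 0 else w ^ m * ((‖w‖ ^ 2 * Real.log (‖w‖ ^ 2) : ℝ) : ℂ)

open Filter Topology Asymptotics

/-- The function `w^a · w̄^b · (log |w|²)^c`. The conventions `0 ^ k = 0` for integers `k ≠ 0` and
`log 0 = 0` make it vanish at the origin unless `a = b = c = 0`. -/
noncomputable def G (a b : ℤ) (c : ℕ) (w : ℂ) : ℂ :=
  w ^ a * (starRingEnd ℂ w) ^ b * ((Real.log (‖w‖ ^ 2) : ℝ) : ℂ) ^ c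

lemma G_zero {a b : ℤ} (c : ℕ) (h : 1 ≤ a + b) : G a b c 0 = 0 := by
  rcases eq_or_ne a 0 with rfl | ha
  · have hb : b ≠ 0 := by omega
    simp [G, zero_zpow _ hb]
  · simp [G, zero_zpow _ ha]

lemma norm_G (a b : ℤ) (c : ℕ) {w : ℂ} (hw : w ≠ 0) :
    ‖G a b c w‖ = ‖w‖ ^ (a + b) * |Real.log (‖w‖ ^ 2)| ^ c := by
  rw [zpow_add₀ (norm_ne_zero_iff.mpr hw)]
  simp only [G, norm_mul, norm_pow, norm_zpow, RCLike.norm_conj, Complex.norm_real,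
    Real.norm_eq_abs]

lemma tendsto_mul_abs_log_pow (c : ℕ) :
    Tendsto (fun r : ℝ => r * |Real.log (r ^ 2)| ^ c) (𝓝[>] 0) (𝓝 0) := by
  have h := (isLittleO_abs_log_rpow_rpow_nhdsGT_zero (s := -1) c (by norm_num)).tendsto_div_nhds_zero
  have h2 := h.const_mul ((2 : ℝ) ^ c)
  rw [mul_zero] at h2
  refine h2.congr' ?_
  filter_upwards [self_mem_nhdsWithin] with r hr
  have hr : 0 < r := hr
  rw [Real.log_pow, Real.rpow_neg_one, Real.rpow_natCast, div_inv_eq_mul, abs_mul, mul_pow]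
  simp
  ring

lemma isLittleO_G {a b : ℤ} (c j : ℕ) (h : (j : ℤ) + 1 ≤ a + b) :
    G a b c =o[𝓝 0] fun w : ℂ => ‖w‖ ^ j := by
  have hnorm : Tendsto (fun w : ℂ => ‖w‖) (𝓝[≠] 0) (𝓝[>] 0) := tendsto_norm_nhdsNE_zero
  have ht := (tendsto_mul_abs_log_pow c).comp hnorm
  rw [isLittleO_iff]
  intro ε hε
  have h1 : ∀ᶠ w : ℂ in 𝓝[≠] 0, ‖G a b c w‖ ≤ ε * ‖‖w‖ ^ j‖ := by
    have hball : ∀ᶠ w : ℂ in 𝓝[≠] 0, ‖w‖ < 1 :=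
      nhdsWithin_le_nhds ((continuous_norm.tendsto' (0 : ℂ) 0 norm_zero).eventually_lt_const
        one_pos)
    filter_upwards [ht.eventually_lt_const hε, hball, self_mem_nhdsWithin] with w h2 h3 h4
    have hw : 0 < ‖w‖ := norm_pos_iff.mpr h4
    rw [norm_G a b c h4, norm_pow, norm_norm]
    have h5 : ‖w‖ ^ (a + b) ≤ ‖w‖ ^ ((j : ℤ) + 1) :=
      zpow_le_zpow_right_of_le_one₀ hw h3.le h
    rw [zpow_add_one₀ hw.ne', zpow_natCast] at h5
    simp only [Function.comp_apply] at h2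
    calc ‖w‖ ^ (a + b) * |Real.log (‖w‖ ^ 2)| ^ c
        ≤ ‖w‖ ^ j * ‖w‖ * |Real.log (‖w‖ ^ 2)| ^ c := by gcongr
      _ = (‖w‖ * |Real.log (‖w‖ ^ 2)| ^ c) * ‖w‖ ^ j := by ring
      _ ≤ ε * ‖w‖ ^ j := by gcongr
  rw [eventually_nhdsWithin_iff] at h1
  filter_upwards [h1] with w hw
  rcases eq_or_ne w 0 with rfl | h0
  · rw [G_zero c (by omega), norm_zero]
    positivity
  · exact hw h0

/-- The total real derivative of `G a b c` away from the origin, in terms of `dw` and `dw̄`. -/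
noncomputable def G' (a b : ℤ) (c : ℕ) (w : ℂ) : ℂ →L[ℝ] ℂ :=
  (a * G (a - 1) b c w + c * G (a - 1) b (c - 1) w) • ContinuousLinearMap.id ℝ ℂ +
    (b * G a (b - 1) c w + c * G a (b - 1) (c - 1) w) • (Complex.conjCLE : ℂ →L[ℝ] ℂ)

/-- The identity `d(log |w|²) = dw / w + dw̄ / w̄`. -/
lemma hasFDerivAt_log_norm_sq {w : ℂ} (hw : w ≠ 0) :
    HasFDerivAt (fun w : ℂ => ((Real.log (‖w‖ ^ 2) : ℝ) : ℂ))
      (w⁻¹ • ContinuousLinearMap.id ℝ ℂ +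
        (starRingEnd ℂ w)⁻¹ • (Complex.conjCLE : ℂ →L[ℝ] ℂ)) w := by
  have h1 : HasFDerivAt (fun w : ℂ => ‖w‖ ^ 2) (2 • innerSL ℝ w) w :=
    (hasStrictFDerivAt_norm_sq w).hasFDerivAt
  have h2 := h1.log (by positivity)
  have h3 := Complex.ofRealCLM.hasFDerivAt.comp w h2
  refine h3.congr_fderiv ?_
  ext v
  have hc : starRingEnd ℂ w ≠ 0 := by simpa using hw
  have hn : ((‖w‖ : ℂ)) ^ 2 = w * starRingEnd ℂ w := by
    rw [Complex.mul_conj, Complex.normSq_eq_norm_sq]; push_cast; rfl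
  have hi : 2 * ((inner ℝ w v : ℝ) : ℂ) = starRingEnd ℂ w * v + w * starRingEnd ℂ v := by
    apply Complex.ext <;> simp [Complex.inner] <;> ring
  have key : ((‖w‖ : ℂ) ^ 2)⁻¹ * (2 * ((inner ℝ w v : ℝ) : ℂ)) =
      w⁻¹ * v + (starRingEnd ℂ w)⁻¹ * starRingEnd ℂ v := by
    rw [hi, hn]
    field_simp
  simpa [mul_add] using key

lemma hasFDerivAt_G_of_ne (a b : ℤ) (c : ℕ) {w : ℂ} (hw : w ≠ 0) :
    HasFDerivAt (G a b c) (G' a b c w) w := by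
  have hc : starRingEnd ℂ w ≠ 0 := by simpa using hw
  have h1 : HasFDerivAt (fun w : ℂ => w ^ a) _ w :=
    (hasDerivAt_zpow a w (Or.inl hw)).hasFDerivAt.restrictScalars ℝ
  have h2 : HasFDerivAt (fun w : ℂ => (starRingEnd ℂ w) ^ b) _ w :=
    ((hasDerivAt_zpow b (starRingEnd ℂ w) (Or.inl hc)).hasFDerivAt.restrictScalars ℝ).comp w
      (Complex.conjCLE : ℂ →L[ℝ] ℂ).hasFDerivAt
  have h3 := (hasFDerivAt_log_norm_sq hw).pow c
  refine ((h1.mul h2).mul h3).congr_fderiv ?_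
  ext v
  simp [G', G, zpow_sub_one₀ hw, zpow_sub_one₀ hc]
  ring

lemma hasFDerivAt_G {a b : ℤ} (c : ℕ) (h : 2 ≤ a + b) (w : ℂ) :
    HasFDerivAt (G a b c) (G' a b c w) w := by
  rcases eq_or_ne w 0 with rfl | hw
  · have h0 : G' a b c 0 = 0 := by
      ext v
      simp [G', G_zero (a := a - 1) (b := b) _ (by omega),
        G_zero (a := a) (b := b - 1) _ (by omega)]
    rw [h0, hasFDerivAt_iff_isLittleO_nhds_zero]
    have := isLittleO_G (a := a) (b := b) c 1 (by push_cast; omega)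
    simp only [pow_one] at this
    simpa [G_zero (a := a) (b := b) c (by omega)] using isLittleO_norm_right.mp this
  · exact hasFDerivAt_G_of_ne a b c hw

lemma continuous_G {a b : ℤ} (c : ℕ) (h : 1 ≤ a + b) : Continuous (G a b c) := by
  rw [continuous_iff_continuousAt]
  intro w
  rcases eq_or_ne w 0 with rfl | hw
  · have := isLittleO_G (a := a) (b := b) c 0 (by push_cast; omega)
    simp only [pow_zero, isLittleO_one_iff] at this
    rwa [ContinuousAt, G_zero c h]
  · exact (hasFDerivAt_G_of_ne a b c hw).continuousAt

lemma contDiff_G (n : ℕ) : ∀ (a b : ℤ) (c : ℕ), (n : ℤ) + 1 ≤ a + b →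
    ContDiff ℝ n (G a b c) := by
  induction n with
  | zero =>
    intro a b c h
    exact contDiff_zero.mpr (continuous_G c (by simpa using h))
  | succ n ih =>
    intro a b c h
    push_cast at h
    have hd := hasFDerivAt_G (a := a) (b := b) c (by omega)
    have hf : fderiv ℝ (G a b c) = G' a b c := funext fun w => (hd w).fderiv
    rw [Nat.cast_add, Nat.cast_one, contDiff_succ_iff_fderiv]
    refine ⟨fun w => (hd w).differentiableAt, by simp, ?_⟩
    rw [hf]
    have e1 : ∀ c, ContDiff ℝ n (G (a - 1) b c) := fun c => ih _ _ c (by omega)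
    have e2 : ∀ c, ContDiff ℝ n (G a (b - 1) c) := fun c => ih _ _ c (by omega)
    unfold G'
    exact (((contDiff_const.mul (e1 c)).add (contDiff_const.mul (e1 (c - 1)))).smul
      contDiff_const).add
      (((contDiff_const.mul (e2 c)).add (contDiff_const.mul (e2 (c - 1)))).smul contDiff_const)

lemma f_eq_G (m : ℕ) : f m = G (m + 1) 1 1 := by
  funext w
  rcases eq_or_ne w 0 with rfl | hw
  · simp [f, G]
  · have hn : ((‖w‖ : ℂ)) ^ 2 = w * starRingEnd ℂ w := by
      rw [Complex.mul_conj, Complex.normSq_eq_norm_sq]; push_cast; rfl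
    simp only [f, if_neg hw, G, zpow_add_one₀ hw, zpow_natCast, zpow_one, pow_one]
    rw [Complex.ofReal_mul, Complex.ofReal_pow, hn]
    ring

lemma not_contDiff_pow_mul_log (n : ℕ) : ∀ (α β : ℝ) (h : ℝ → ℝ), α ≠ 0 →
    (∀ x, 0 < x → h x = x ^ n * (α * Real.log x + β)) → ¬ ContDiff ℝ (⊤ : ℕ∞) h := by
  induction n with
  | zero =>
    intro α β h hα hx hs
    -- Continuity at `0` would give `log` a finite limit there.
    have h1 : Tendsto h (𝓝[>] 0) (𝓝 (h 0)) :=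
      (hs.continuous.tendsto 0).mono_left nhdsWithin_le_nhds
    have h2 : Tendsto Real.log (𝓝[>] 0) (𝓝 ((h 0 - β) / α)) := by
      refine ((h1.sub_const β).div_const α).congr' ?_
      filter_upwards [self_mem_nhdsWithin] with x hx0
      rw [hx x hx0]
      field_simp
      ring
    exact not_tendsto_nhds_of_tendsto_atBot Real.tendsto_log_nhdsGT_zero _ h2
  | succ n ih =>
    intro α β h hα hx hs
    refine ih ((n + 1) * α) ((n + 1) * β + α) (deriv h) (by positivity) ?_
      (contDiff_infty_iff_deriv.mp hs).2
    intro x hx0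
    have he : h =ᶠ[𝓝 x] fun x => x ^ (n + 1) * (α * Real.log x + β) := by
      filter_upwards [lt_mem_nhds hx0] with y hy using hx y hy
    rw [he.deriv_eq]
    have hd := (hasDerivAt_pow (n + 1) x).mul
      (((Real.hasDerivAt_log hx0.ne').const_mul α).add_const β)
    refine hd.deriv.trans ?_
    push_cast
    field_simp
    ring

/-- For every `m ≥ 0`, the function `w ↦ w^m·|w|²·log(|w|²)` (extended by `0` at the origin)
is of class `C^m` on `ℂ ≅ ℝ²`, but not of class `C^∞`. -/
theorem stmt12 (m : ℕ) : ContDiff ℝ (m : ℕ∞) (f m) ∧ ¬ ContDiff ℝ (⊤ : ℕ∞) (f m) := by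
  constructor
  · rw [f_eq_G]
    exact contDiff_G m _ _ _ (by omega)
  · intro hs
    refine not_contDiff_pow_mul_log (m + 2) 2 0 (fun x : ℝ => (f m (x : ℂ)).re) two_ne_zero ?_
      (Complex.reCLM.contDiff.comp (hs.comp Complex.ofRealCLM.contDiff))
    intro x hx
    have hx' : (x : ℂ) ≠ 0 := by exact_mod_cast hx.ne'
    simp only [f, if_neg hx', Complex.norm_real, Real.norm_eq_abs, sq_abs]
    rw [← Complex.ofReal_pow, ← Complex.ofReal_mul, Complex.ofReal_re, Real.log_pow]
    push_cast
    ring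
end

section
/- Let χ : [0,∞) → ℝ be a smooth function with compact support such that χ ≡ 1 in a neighborhood of 0. Then there exist a C^∞ function G : ℂ → ℝ and a nonzero constant c (in fact c = π) such that for all w ∈ ℂ \ {0}, ∫_ℂ χ(|ζ|²)·|ζ|²/(|ζ|² + |w|²) dλ(ζ) = G(w) + c·|w|²·log(|w|²), where λ is Lebesgue measure on ℂ ≅ ℝ². In particular, this function of w is not smooth at w = 0. -/
/-!
In polar coordinates with `u = |ζ|²`, and with `t = |w|²`, the integral over `ℂ` becomes
`π ∫₀^∞ χ(u) u / (u + t) du` (`integral_complex_norm_sq`). Since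
`χ u / (u + t) = χ - t χ / (u + t)`, integrating `t χ(u) / (u + t)` by parts gives the boundary term
`t log t` and leaves `∫ χ + t ∫₀^∞ χ'(u) log (u + t) du` (`integral_Ioi_cutoff`).
Because `χ' = 0` near `0`, the function `ψ = χ' 1_{u > 0}` is smooth with compact support
(`contDiff_halfDeriv`), and `∫ log (u + t) ψ(u) du` is a convolution of `ψ(-·)` with the
locally integrable function `log`, hence smooth in `t ∈ ℝ`. Substituting `t = |w|²` gives `G`.

For the failure of smoothness, restrict to the real line: if the integral were smooth at `0`,
subtracting `G` would leave a smooth function equal to `π x² log x²` off `0`. Its derivative is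
`2π (2 x log |x| + x)` for `x ≠ 0`, hence `0` at `0` by continuity, and the difference quotient of
the derivative at `0` is `2π (2 log |x| + 1)`, which is unbounded (`not_contDiffAt_sq_mul_log`).
-/

open MeasureTheory

/-- Integration in polar coordinates for functions of `|ζ|²`. -/
lemma integral_complex_norm_sq (f : ℝ → ℝ) :
    ∫ ζ : ℂ, f (‖ζ‖ ^ 2) = Real.pi * ∫ u in Set.Ioi (0 : ℝ), f u := by
  have h := integral_fun_norm_addHaar (volume : Measure ℂ) (fun r => f (r ^ 2))
  have hv : (volume : Measure ℂ).real (Metric.ball 0 1) = Real.pi := by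
    simp [measureReal_def]
  rw [h, hv, ← integral_comp_rpow_Ioi_of_pos (g := f) (p := 2) (by norm_num)]
  simp only [Complex.finrank_real_complex, smul_eq_mul, nsmul_eq_mul, mul_assoc]
  rw [integral_const_mul]
  norm_num
  ring

lemma locallyIntegrable_log : LocallyIntegrable Real.log volume := by
  rw [locallyIntegrable_iff]
  intro k hk
  obtain ⟨r, hr⟩ := hk.isBounded.subset_closedBall 0
  rw [Real.closedBall_eq_Icc] at hr
  rcases le_or_gt (0 - r) (0 + r) with h | h
  · have := (intervalIntegrable_iff_integrableOn_Icc_of_le h (μ := volume)).1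
      (intervalIntegral.intervalIntegrable_log' (a := 0 - r) (b := 0 + r))
    exact this.mono_set hr
  · rw [Set.Icc_eq_empty h.not_ge] at hr
    rw [Set.subset_empty_iff.1 hr]
    exact integrableOn_empty

/-- The derivative of `χ` cut off to the positive half-line. -/
noncomputable def halfDeriv (χ : ℝ → ℝ) : ℝ → ℝ := fun u => if 0 < u then deriv χ u else 0

/-- As `χ' = 0` near `0`, cutting `χ'` off at `0` preserves smoothness. -/
lemma contDiff_halfDeriv {χ : ℝ → ℝ} (hχ : ContDiff ℝ (⊤ : ℕ∞) χ)
    (hone : ∀ᶠ x in nhds (0 : ℝ), χ x = 1) : ContDiff ℝ (⊤ : ℕ∞) (halfDeriv χ) := by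
  have hd : ContDiff ℝ (⊤ : ℕ∞) (deriv χ) := (contDiff_infty_iff_deriv.1 hχ).2
  obtain ⟨δ, hδ, h⟩ := Metric.eventually_nhds_iff.1 hone.eventually_nhds
  have h0 : ∀ x, |x| < δ → deriv χ x = 0 := fun x hx => by
    have : χ =ᶠ[nhds x] fun _ => (1 : ℝ) := h (by simpa [Real.dist_eq] using hx)
    rw [this.deriv_eq]; simp
  rw [contDiff_iff_contDiffAt]
  intro x
  rcases lt_or_ge 0 x with hx | hx
  · refine hd.contDiffAt.congr_of_eventuallyEq ?_
    filter_upwards [lt_mem_nhds hx] with y hy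
    simp [halfDeriv, hy]
  · refine (contDiffAt_const (c := (0 : ℝ))).congr_of_eventuallyEq ?_
    filter_upwards [gt_mem_nhds (lt_of_le_of_lt hx hδ)] with y hy
    by_cases hy0 : 0 < y
    · simp only [halfDeriv, hy0, if_true]
      exact h0 y (by rwa [abs_of_pos hy0])
    · simp [halfDeriv, hy0]

lemma hasCompactSupport_halfDeriv {χ : ℝ → ℝ} (hsupp : HasCompactSupport χ) :
    HasCompactSupport (halfDeriv χ) := by
  refine hsupp.deriv.mono' ?_
  refine subset_trans ?_ subset_closure
  intro x hx
  by_cases h : 0 < x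
  · simpa [halfDeriv, h] using hx
  · simp [halfDeriv, h] at hx

/-- Smoothness holds for all real `t`, since after a translation this is a convolution with the
locally integrable function `log`. -/
lemma contDiff_logIntegral {ψ : ℝ → ℝ} (hψ : ContDiff ℝ (⊤ : ℕ∞) ψ) (hs : HasCompactSupport ψ) :
    ContDiff ℝ (⊤ : ℕ∞) (fun t => ∫ u, Real.log (u + t) * ψ u) := by
  have hs' : HasCompactSupport (fun y => ψ (-y)) :=
    hs.comp_homeomorph (Homeomorph.neg ℝ)
  have h := hs'.contDiff_convolution_right (n := ⊤) (ContinuousLinearMap.mul ℝ ℝ)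
    locallyIntegrable_log (hψ.comp contDiff_neg)
  convert h using 2 with t
  rw [convolution_def, ← integral_add_right_eq_self (fun s => ContinuousLinearMap.mul ℝ ℝ (Real.log s) (ψ (-(t - s)))) t]
  simp

/-- Integration by parts: the singular part `t log t` is the boundary term at `u = 0`. -/
lemma integral_Ioi_cutoff {χ : ℝ → ℝ} (hχ : ContDiff ℝ (⊤ : ℕ∞) χ) (hsupp : HasCompactSupport χ)
    (hone : ∀ᶠ x in nhds (0 : ℝ), χ x = 1) {t : ℝ} (ht : 0 < t) :
    ∫ u in Set.Ioi (0 : ℝ), χ u * u / (u + t) =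
      (∫ u in Set.Ioi (0 : ℝ), χ u) + t * (∫ u, Real.log (u + t) * halfDeriv χ u)
        + t * Real.log t := by
  obtain ⟨r, hr⟩ := hsupp.isCompact.isBounded.subset_closedBall 0
  -- the `+ 1` makes `χ` and `χ'` vanish at the endpoint `R` itself
  set R := |r| + 1 with hR
  have hR0 : 0 < R := by positivity
  have hz : ∀ u, R ≤ u → u ∉ tsupport χ := fun u hu hmem => by
    have h1 := hr hmem
    rw [Metric.mem_closedBall, Real.dist_eq, sub_zero] at h1
    linarith [le_abs_self u, le_abs_self r]
  have hχ0 : ∀ u, R ≤ u → χ u = 0 := fun u hu => image_eq_zero_of_notMem_tsupport (hz u hu)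
  have hdχ0 : ∀ u, R ≤ u → deriv χ u = 0 := fun u hu =>
    Function.notMem_support.1 fun h => hz u hu (support_deriv_subset h)
  have hc : Continuous χ := hχ.continuous
  have hdc : Continuous (deriv χ) := (contDiff_infty_iff_deriv.1 hχ).2.continuous
  have cut : ∀ f : ℝ → ℝ, (∀ u, R ≤ u → f u = 0) →
      ∫ u in Set.Ioi (0 : ℝ), f u = ∫ u in (0 : ℝ)..R, f u := fun f hf => by
    rw [intervalIntegral.integral_of_le hR0.le]
    refine setIntegral_eq_of_subset_of_forall_sdiff_eq_zero measurableSet_Ioi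
      Set.Ioc_subset_Ioi_self fun x hx => hf x ?_
    by_contra hlt
    exact hx.2 ⟨hx.1, (not_le.1 hlt).le⟩
  have hlog : ∫ u, Real.log (u + t) * halfDeriv χ u =
      ∫ u in (0 : ℝ)..R, Real.log (u + t) * deriv χ u := by
    rw [← cut _ fun u hu => by simp [hdχ0 u hu],
      ← setIntegral_eq_integral_of_forall_compl_eq_zero (s := Set.Ioi 0)
        fun u hu => by simp [halfDeriv, Set.mem_Ioi.not.1 hu]]
    exact setIntegral_congr_fun measurableSet_Ioi fun u hu => by
      simp [halfDeriv, Set.mem_Ioi.1 hu]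
  have hpos : ∀ u ∈ Set.uIcc 0 R, 0 < u + t := fun u hu => by
    rw [Set.uIcc_of_le hR0.le] at hu
    linarith [hu.1]
  have i1 : IntervalIntegrable χ volume 0 R := hc.intervalIntegrable _ _
  have i2 : IntervalIntegrable (fun u => Real.log (u + t) * deriv χ u) volume 0 R := by
    refine ContinuousOn.intervalIntegrable (ContinuousOn.mul ?_ hdc.continuousOn)
    exact ContinuousOn.log (by fun_prop) fun u hu => (hpos u hu).ne'
  have i3 : IntervalIntegrable (fun u => χ u / (u + t)) volume 0 R :=
    ContinuousOn.intervalIntegrable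
      (hc.continuousOn.div (by fun_prop) fun u hu => (hpos u hu).ne')
  have ftc : ∫ u in (0 : ℝ)..R, (Real.log (u + t) * deriv χ u + χ u / (u + t)) =
      Real.log (R + t) * χ R - Real.log (0 + t) * χ 0 := by
    refine intervalIntegral.integral_eq_sub_of_hasDerivAt
      (f := fun u => Real.log (u + t) * χ u) (fun u hu => ?_) (i2.add i3)
    have hd : HasDerivAt χ (deriv χ u) u :=
      (hχ.differentiable (by simp) u).hasDerivAt
    refine ((((hasDerivAt_id' u).add_const t).log (hpos u hu).ne').mul hd).congr_deriv ?_
    ring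
  rw [intervalIntegral.integral_add i2 i3, hχ0 R le_rfl, hone.self_of_nhds] at ftc
  rw [cut _ fun u hu => by simp [hχ0 u hu], cut _ hχ0, hlog]
  have split : ∫ u in (0 : ℝ)..R, χ u * u / (u + t) =
      ∫ u in (0 : ℝ)..R, (χ u - t * (χ u / (u + t))) :=
    intervalIntegral.integral_congr fun u hu => by
      have := (hpos u hu).ne'
      field_simp
      ring
  rw [split, intervalIntegral.integral_sub i1 (i3.const_mul t),
    intervalIntegral.integral_const_mul]
  rw [zero_add] at ftc
  linear_combination (-t) * ftc

/-- A function equal to `π x² log x²` off `0` is not smooth at `0`, whatever its value there. -/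
lemma not_contDiffAt_sq_mul_log {H : ℝ → ℝ} (hH : ContDiffAt ℝ (⊤ : ℕ∞) H 0)
    (h : ∀ x, x ≠ 0 → H x = Real.pi * (x ^ 2 * Real.log (x ^ 2))) : False := by
  have hder : ∀ x, x ≠ 0 → deriv H x = 2 * Real.pi * (2 * (x * Real.log x) + x) := by
    intro x hx
    have he : H =ᶠ[nhds x] fun y => Real.pi * (y ^ 2 * (2 * Real.log y)) := by
      filter_upwards [isOpen_ne.mem_nhds hx] with y hy
      rw [h y hy, Real.log_pow]
      norm_num
    rw [he.deriv_eq]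
    have := (((hasDerivAt_pow 2 x).mul ((Real.hasDerivAt_log hx).const_mul 2)).const_mul
      Real.pi).deriv
    refine this.trans ?_
    norm_num
    field_simp
  have hdd : DifferentiableAt ℝ (deriv H) 0 :=
    (hH.derivWithin (m := (⊤ : ℕ∞)) le_rfl).differentiableAt (by simp)
  have hzero : deriv H 0 = 0 := by
    have l1 : Filter.Tendsto (deriv H) (nhdsWithin 0 {0}ᶜ) (nhds (deriv H 0)) :=
      hdd.continuousAt.tendsto.mono_left nhdsWithin_le_nhds
    have hcont : Continuous fun x : ℝ => 2 * Real.pi * (2 * (x * Real.log x) + x) := by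
      have := Real.continuous_mul_log
      fun_prop
    have l2 : Filter.Tendsto (deriv H) (nhdsWithin 0 {0}ᶜ) (nhds 0) := by
      have := (hcont.tendsto 0).mono_left (nhdsWithin_le_nhds (s := {0}ᶜ))
      simp only [zero_mul, mul_zero, add_zero] at this
      refine this.congr' ?_
      filter_upwards [self_mem_nhdsWithin] with x hx
      exact (hder x hx).symm
    exact tendsto_nhds_unique l1 l2
  have hslope := hasDerivAt_iff_tendsto_slope.1 hdd.hasDerivAt
  refine not_tendsto_nhds_of_tendsto_atBot ?_ _ hslope
  have hb : Filter.Tendsto (fun x : ℝ => 2 * Real.pi * (2 * Real.log x + 1))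
      (nhdsWithin 0 {0}ᶜ) Filter.atBot :=
    Filter.Tendsto.const_mul_atBot (by positivity)
      (Filter.tendsto_atBot_add_const_right _ _
        (Filter.Tendsto.const_mul_atBot (by norm_num) Real.tendsto_log_nhdsNE_zero))
  refine hb.congr' ?_
  filter_upwards [self_mem_nhdsWithin] with x hx
  have hx' : x ≠ 0 := hx
  rw [slope_def_field, hzero, hder x hx']
  field_simp
  ring

/-- Let `χ : [0,∞) → ℝ` be smooth with compact support, with `χ ≡ 1` near `0`. Then there are a
`C^∞` function `G : ℂ → ℝ` and the nonzero constant `c = π` such that for all `w ≠ 0`,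
`∫_ℂ χ(|ζ|²)·|ζ|²/(|ζ|² + |w|²) dλ(ζ) = G(w) + c·|w|²·log(|w|²)`, where `λ` is Lebesgue
measure on `ℂ ≅ ℝ²`. In particular this function of `w` is not smooth at `w = 0`. -/
theorem stmt13 (χ : ℝ → ℝ) (hχ : ContDiff ℝ (⊤ : ℕ∞) χ) (hsupp : HasCompactSupport χ)
    (hone : ∀ᶠ x in nhds (0 : ℝ), χ x = 1) :
    (∃ G : ℂ → ℝ, ContDiff ℝ (⊤ : ℕ∞) G ∧
      ∀ w : ℂ, w ≠ 0 →
        (∫ ζ : ℂ, χ (‖ζ‖ ^ 2) * ‖ζ‖ ^ 2 / (‖ζ‖ ^ 2 + ‖w‖ ^ 2)) =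
          G w + Real.pi * (‖w‖ ^ 2 * Real.log (‖w‖ ^ 2))) ∧
    ¬ ContDiffAt ℝ (⊤ : ℕ∞)
        (fun w : ℂ => ∫ ζ : ℂ, χ (‖ζ‖ ^ 2) * ‖ζ‖ ^ 2 / (‖ζ‖ ^ 2 + ‖w‖ ^ 2)) 0 := by
  have key : ∃ G : ℂ → ℝ, ContDiff ℝ (⊤ : ℕ∞) G ∧
      ∀ w : ℂ, w ≠ 0 →
        (∫ ζ : ℂ, χ (‖ζ‖ ^ 2) * ‖ζ‖ ^ 2 / (‖ζ‖ ^ 2 + ‖w‖ ^ 2)) =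
          G w + Real.pi * (‖w‖ ^ 2 * Real.log (‖w‖ ^ 2)) := by
    refine ⟨fun w => Real.pi * ((∫ u in Set.Ioi (0 : ℝ), χ u) +
      ‖w‖ ^ 2 * (∫ u, Real.log (u + ‖w‖ ^ 2) * halfDeriv χ u)), ?_, fun w hw => ?_⟩
    · have hn : ContDiff ℝ (⊤ : ℕ∞) (fun w : ℂ => ‖w‖ ^ 2) := contDiff_norm_sq ℝ
      have hg := (contDiff_logIntegral (contDiff_halfDeriv hχ hone)
        (hasCompactSupport_halfDeriv hsupp)).comp hn
      exact contDiff_const.mul (contDiff_const.add (hn.mul hg))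
    · have hw2 : 0 < ‖w‖ ^ 2 := by positivity
      rw [integral_complex_norm_sq (fun u => χ u * u / (u + ‖w‖ ^ 2)),
        integral_Ioi_cutoff hχ hsupp hone hw2]
      ring
  refine ⟨key, fun hF => ?_⟩
  obtain ⟨G, hG, hw⟩ := key
  have hofReal : ContDiffAt ℝ (⊤ : ℕ∞) (fun x : ℝ => (x : ℂ)) 0 :=
    Complex.ofRealCLM.contDiff.contDiffAt
  have hFG := hF.sub hG.contDiffAt
  rw [← Complex.ofReal_zero] at hFG
  refine not_contDiffAt_sq_mul_log (hFG.comp (0 : ℝ) hofReal) fun x hx => ?_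
  have := hw (x : ℂ) (by exact_mod_cast hx)
  simp only [Function.comp]
  rw [this]
  simp only [Complex.norm_real, Real.norm_eq_abs, sq_abs]
  ring
end
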